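/- (Associativity of DPO rule composition, second direction, rules without application conditions.) Let C be a category satisfying the stated assumptions, and let r1, r2, r3 be linear rules in C. If μ32 is a DPO-admissible match of r3 into r2 with composite r32 = r3 ▷[μ32] r2, and μ(32)1 is a DPO-admissible match of r32 into r1, then there exist a DPO-admissible match μ21 of r2 into r1 and a DPO-admissible match μ3(21) of r3 into r21 := r2 ▷[μ21] r1 such that the composite rules (r3 ▷[μ32] r2) ▷[μ(32)1] r1 and r3 ▷[μ3(21)] (r2 ▷[μ21] r1) are isomorphic as spans. -/

import Mathlib

open CategoryTheory CategoryTheory.Limits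

universe v u

/-- The ambient category possesses an epi-mono factorization. -/
def HasEpiMonoFact (𝒞 : Type u) [Category.{v} 𝒞] : Prop :=
  ∀ {X Y : 𝒞} (f : X ⟶ Y), ∃ (Z : 𝒞) (e : X ⟶ Z) (m : Z ⟶ Y),
    Epi e ∧ Mono m ∧ e ≫ m = f

/-- The ambient category is finitary: every object has only finitely many subobjects. -/
def Finitary (𝒞 : Type u) [Category.{v} 𝒞] : Prop :=
  ∀ X : 𝒞, Finite (Subobject X)

/-- A linear rule: a span `O ⟵o— K —i⟶ I` of monomorphisms. -/
structure Rule (𝒞 : Type u) [Category.{v} 𝒞] where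
  O : 𝒞
  K : 𝒞
  I : 𝒞
  o : K ⟶ O
  i : K ⟶ I
  mono_o : Mono o
  mono_i : Mono i

/-- The data of a DPO direct derivation applying the linear rule `(O ⟵o— K —i⟶ I)`
to an object `X` along the match `m : I ⟶ X`: a pushout complement `(D, k, d)` for
`(i, m)` together with the pushout `Y` of `(o, k)`, with comatch `ms : O ⟶ Y`. -/
structure DerivData {𝒞 : Type u} [Category.{v} 𝒞] {O K I X : 𝒞}
    (o : K ⟶ O) (i : K ⟶ I) (m : I ⟶ X) where
  D : 𝒞
  k : K ⟶ D
  d : D ⟶ X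
  poc : IsPushout i k m d
  Y : 𝒞
  ms : O ⟶ Y
  ds : D ⟶ Y
  po : IsPushout o k ms ds

/-- The data witnessing that the span `μ21 = (I2 ⟵p2— M —p1⟶ O1)` of monomorphisms
is a DPO-admissible match of the rule `r2` into the rule `r1`, together with the
construction of the DPO composite rule `r2 ▷[μ21] r1`: the pushout `N` of `μ21`, a
pushout complement `K2b` for `(r2.i, n2)` with pushout `O21` of `(r2.o, k2)`, a
pushout complement `K1b` for `(r1.o, n1)` with pushout `I21` of `(r1.i, k1)`, and the
pullback `K21` of `(w2, w1)`; the composite rule is the span of monomorphisms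
`O21 ⟵ K21 ⟶ I21` with legs `q2 ≫ v2` and `q1 ≫ v1`. -/
structure CompData {𝒞 : Type u} [Category.{v} 𝒞] (r2 r1 : Rule 𝒞)
    (M : 𝒞) (p2 : M ⟶ r2.I) (p1 : M ⟶ r1.O) where
  mono_p2 : Mono p2
  mono_p1 : Mono p1
  N : 𝒞
  n2 : r2.I ⟶ N
  n1 : r1.O ⟶ N
  poN : IsPushout p2 p1 n2 n1
  mono_n2 : Mono n2
  mono_n1 : Mono n1
  K2b : 𝒞
  k2 : r2.K ⟶ K2b
  w2 : K2b ⟶ N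
  poc2 : IsPushout r2.i k2 n2 w2
  O21 : 𝒞
  c2 : r2.O ⟶ O21
  v2 : K2b ⟶ O21
  poO : IsPushout r2.o k2 c2 v2
  K1b : 𝒞
  k1 : r1.K ⟶ K1b
  w1 : K1b ⟶ N
  poc1 : IsPushout r1.o k1 n1 w1
  I21 : 𝒞
  c1 : r1.I ⟶ I21
  v1 : K1b ⟶ I21
  poI : IsPushout r1.i k1 c1 v1
  K21 : 𝒞
  q2 : K21 ⟶ K2b
  q1 : K21 ⟶ K1b
  pbK : IsPullback q2 q1 w2 w1
  mono_oleg : Mono (q2 ≫ v2)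
  mono_ileg : Mono (q1 ≫ v1)

/-- The DPO composite rule `r2 ▷[μ21] r1` extracted from composition data. -/
def CompData.rule {𝒞 : Type u} [Category.{v} 𝒞] {r2 r1 : Rule 𝒞}
    {M : 𝒞} {p2 : M ⟶ r2.I} {p1 : M ⟶ r1.O}
    (cd : CompData r2 r1 M p2 p1) : Rule 𝒞 :=
  ⟨cd.O21, cd.K21, cd.I21, cd.q2 ≫ cd.v2, cd.q1 ≫ cd.v1, cd.mono_oleg, cd.mono_ileg⟩

/-- Two linear rules are isomorphic as spans. -/
def RuleIso {𝒞 : Type u} [Category.{v} 𝒞] (r r' : Rule 𝒞) : Prop :=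
  ∃ (φO : r.O ≅ r'.O) (φK : r.K ≅ r'.K) (φI : r.I ≅ r'.I),
    r.o ≫ φO.hom = φK.hom ≫ r'.o ∧ r.i ≫ φI.hom = φK.hom ≫ r'.i

/-!
A direct derivation along a composite rule `r3 ▷ r2` is a step with `r2` followed by a step with
`r3` (the concurrency theorem). Given `r32 ▷ r1`, apply this to the derivation of `r32` out of the
union `N'` of `I32` and `O1`. Restricting its `r2`-step and the reverse `r1`-step to the union of
their matches in `N'` yields `r21`, and extending back makes the reverse of `r21` transform the
result `Y` of the `r2`-step into the result of the reverse `r1`-step. The match of `r3` and the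
output of `r21` cover `Y`, so `Y` is the union from which `r3 ▷ r21` is composed, with the same
outer objects as `r32 ▷ r1`.
-/

section Adhesive

variable {𝒞 : Type u} [Category.{v} 𝒞] [Adhesive 𝒞]

theorem isPushout_of_isPullback_of_isPullback {W X Y Z W' X' Y' Z' : 𝒞}
    {f : W ⟶ X} {g : W ⟶ Y} {h : X ⟶ Z} {i : Y ⟶ Z} [Mono f] (H : IsPushout f g h i)
    {f' : W' ⟶ X'} {g' : W' ⟶ Y'} {h' : X' ⟶ Z'} {i' : Y' ⟶ Z'}
    {αW : W' ⟶ W} {αX : X' ⟶ X} {αY : Y' ⟶ Y} {αZ : Z' ⟶ Z}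
    (hh : IsPullback h' αX αZ h) (hi : IsPullback i' αY αZ i) (hf : IsPullback f' αW αX f)
    (w : f' ≫ h' = g' ≫ i') (wg : g' ≫ αY = αW ≫ g) : IsPushout f' g' h' i' := by
  have hg : IsPullback g' αW αY g := by
    refine IsPullback.of_right ?_ wg hi
    rw [← w, ← H.w]
    exact hf.paste_horiz hh
  exact (Adhesive.van_kampen H f' g' h' i' αW αX αY αZ hf hg hh.toCommSq hi.toCommSq ⟨w⟩).2
    ⟨hh, hi⟩

theorem isPushout_pullback_of_jointly_epic {A B Z : 𝒞} {f : A ⟶ Z} {g : B ⟶ Z} [Mono f] [Mono g]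
    (hfg : ∀ {W : 𝒞} (s t : Z ⟶ W), f ≫ s = f ≫ t → g ≫ s = g ≫ t → s = t) :
    IsPushout (pullback.fst f g) (pullback.snd f g) f g := by
  let j := pushout.desc f g pullback.condition
  have : Epi j := ⟨fun s t e => hfg s t
    (by simpa only [j, pushout.inl_desc_assoc] using pushout.inl _ _ ≫= e)
    (by simpa only [j, pushout.inr_desc_assoc] using pushout.inr _ _ ≫= e)⟩
  have : IsIso j := isIso_of_mono_of_epi j
  exact (IsPushout.of_hasPushout _ _).of_iso (Iso.refl _) (Iso.refl _) (Iso.refl _) (asIso j)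
    (by simp) (by simp) (by simp [j, pushout.inl_desc]) (by simp [j, pushout.inr_desc])

theorem isPushout_of_isPullback_of_isPushout {N X K₁ D₁ K₂ D₂ K Z : 𝒞} {j : N ⟶ X}
    {w₁ : K₁ ⟶ N} {k₁ : K₁ ⟶ D₁} {x₁ : D₁ ⟶ X} [Mono w₁] (H₁ : IsPushout w₁ k₁ j x₁)
    {w₂ : K₂ ⟶ N} {k₂ : K₂ ⟶ D₂} {x₂ : D₂ ⟶ X} [Mono w₂] (H₂ : IsPushout w₂ k₂ j x₂)
    {q₁ : K ⟶ K₁} {q₂ : K ⟶ K₂} (hK : IsPullback q₂ q₁ w₂ w₁)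
    {z₁ : Z ⟶ D₁} {z₂ : Z ⟶ D₂} (hZ : IsPullback z₂ z₁ x₂ x₁)
    {k : K ⟶ Z} (h₁ : k ≫ z₁ = q₁ ≫ k₁) (h₂ : k ≫ z₂ = q₂ ≫ k₂) : IsPushout q₁ k k₁ z₁ :=
  isPushout_of_isPullback_of_isPullback H₂
    (Adhesive.isPullback_of_isPushout_of_mono_left H₁).flip hZ.flip hK.flip h₁.symm h₂

end Adhesive

theorem isPullback_of_isPullback_comp {𝒞 : Type u} [Category.{v} 𝒞] {D Q P X N L Z K : 𝒞}
    {a : D ⟶ Q} {b : D ⟶ P} {z : Q ⟶ X} {y : P ⟶ X} (hD : IsPullback a b z y)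
    {x : P ⟶ N} {l : L ⟶ N} {p : Z ⟶ P} {t : Z ⟶ L} (hZ : IsPullback p t x l)
    {s : K ⟶ D} {u : K ⟶ L} (hK : IsPullback s u (b ≫ x) l) :
    IsPullback (s ≫ a) (hZ.lift (s ≫ b) u (by simpa using hK.w)) z (p ≫ y) := by
  have hKP : IsPullback s (hZ.lift (s ≫ b) u (by simpa using hK.w)) b p :=
    IsPullback.of_bot (by simpa using hK) (by simp) hZ
  exact hKP.paste_horiz hD

namespace DerivData

variable {𝒞 : Type u} [Category.{v} 𝒞] {O K I X : 𝒞} {o : K ⟶ O} {i : K ⟶ I} {m : I ⟶ X}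

/-- The direct derivation undoing `δ`: the reverse rule applied along the comatch. -/
def reverse (δ : DerivData o i m) : DerivData i o δ.ms :=
  ⟨δ.D, δ.k, δ.ds, δ.po, X, m, δ.d, δ.poc⟩

/-- Vertical pasting of direct derivations. A derivation `ε` along the lower span of `δ` is what the
literature calls an extension diagram over `δ`. -/
def paste (δ : DerivData o i m) {X' : 𝒞} {j : X ⟶ X'} (ε : DerivData δ.ds δ.d j) :
    DerivData o i (m ≫ j) :=
  ⟨ε.D, δ.k ≫ ε.k, ε.d, δ.poc.paste_vert ε.poc, ε.Y, δ.ms ≫ ε.ms, ε.ds, δ.po.paste_vert ε.po⟩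

variable [Adhesive 𝒞]

instance mono_d [Mono i] (δ : DerivData o i m) : Mono δ.d :=
  Adhesive.mono_of_isPushout_of_mono_left δ.poc

instance mono_ds [Mono o] (δ : DerivData o i m) : Mono δ.ds :=
  Adhesive.mono_of_isPushout_of_mono_left δ.po

instance mono_ms [Mono i] [Mono m] (δ : DerivData o i m) : Mono δ.ms := by
  have : Mono (δ.k ≫ δ.d) := δ.poc.w ▸ inferInstance
  have : Mono δ.k := mono_of_mono δ.k δ.d
  exact Adhesive.mono_of_isPushout_of_mono_right δ.po

theorem hom_ext_of_isPushout [Mono i] (δ : DerivData o i m) {M B : 𝒞} {s : M ⟶ I} {t : M ⟶ B}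
    {b : B ⟶ X} [Mono s] (H : IsPushout s t m b) {W : 𝒞} {f g : δ.Y ⟶ W}
    (hms : δ.ms ≫ f = δ.ms ≫ g)
    (hds : pullback.fst δ.d b ≫ δ.ds ≫ f = pullback.fst δ.d b ≫ δ.ds ≫ g) : f = g := by
  refine δ.po.hom_ext hms ?_
  -- Pulling `H` back along `δ.d` covers `δ.D` by its intersections with `I` and with `B`.
  refine Adhesive.isPushout_isPullback_isPullback_hom_ext H
    (Adhesive.isPullback_of_isPushout_of_mono_left δ.poc).flip (IsPullback.of_hasPullback δ.d b)
    ?_ hds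
  rw [← reassoc_of% δ.po.w, ← reassoc_of% δ.po.w, hms]

section Restriction

variable [Mono i] [Mono o] (δ : DerivData o i m) {X' : 𝒞} {m' : I ⟶ X'} {j : X' ⟶ X} [Mono j]

/-- The restriction of a direct derivation to a subobject `j` of `X` through which its match
factors; its pushout complement is the preimage of `δ.D`. -/
noncomputable def restrict (e : m' ≫ j = m) : DerivData o i m' where
  D := pullback j δ.d
  k := pullback.lift (i ≫ m') δ.k (by rw [Category.assoc, e, δ.poc.w])
  d := pullback.fst j δ.d
  poc := isPushout_of_isPullback_of_isPullback (αW := 𝟙 _) (αX := 𝟙 _) δ.poc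
    (IsPullback.of_vert_isIso_mono ⟨by simp [e]⟩) (IsPullback.of_hasPullback j δ.d)
    (IsPullback.of_vert_isIso ⟨by simp⟩) (pullback.lift_fst _ _ _).symm
    ((pullback.lift_snd _ _ _).trans (Category.id_comp _).symm)
  Y := pushout o _
  ms := pushout.inl o _
  ds := pushout.inr o _
  po := IsPushout.of_hasPushout o _

/-- The inclusion of the context of a restricted direct derivation into the original one. -/
noncomputable def restrictContext (e : m' ≫ j = m) : (δ.restrict e).D ⟶ δ.D :=
  pullback.snd j δ.d

theorem isPullback_restrictContext (e : m' ≫ j = m) :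
    IsPullback (δ.restrict e).d (δ.restrictContext e) j δ.d :=
  IsPullback.of_hasPullback j δ.d

theorem restrict_k_restrictContext (e : m' ≫ j = m) :
    (δ.restrict e).k ≫ δ.restrictContext e = δ.k :=
  pullback.lift_snd _ _ _

/-- The extension diagram exhibiting `δ` as an extension of its restriction along `j`. -/
noncomputable def extension (e : m' ≫ j = m) :
    DerivData (δ.restrict e).ds (δ.restrict e).d j where
  D := δ.D
  k := δ.restrictContext e
  d := δ.d
  poc := IsPushout.of_top (by rw [restrict_k_restrictContext, e]; exact δ.poc)
    (δ.isPullback_restrictContext e).w (δ.restrict e).poc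
  Y := δ.Y
  ms := (δ.restrict e).po.desc δ.ms (δ.restrictContext e ≫ δ.ds)
    (by rw [← Category.assoc, restrict_k_restrictContext, δ.po.w])
  ds := δ.ds
  po := IsPushout.of_top (by rw [IsPushout.inl_desc, restrict_k_restrictContext]; exact δ.po)
    (IsPushout.inr_desc _ _ _ _) (δ.restrict e).po

theorem restrict_ms_extension_ms (e : m' ≫ j = m) :
    (δ.restrict e).ms ≫ (δ.extension e).ms = δ.ms :=
  (δ.restrict e).po.inl_desc _ _ _

theorem exists_comp_extension_ms (e : m' ≫ j = m) {P B : 𝒞} {p : P ⟶ δ.D} {b : P ⟶ B}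
    {c : B ⟶ X'} (hp : p ≫ δ.d = b ≫ c ≫ j) :
    ∃ l : P ⟶ (δ.restrict e).Y, l ≫ (δ.extension e).ms = p ≫ δ.ds := by
  obtain ⟨l, -, rfl⟩ := (δ.isPullback_restrictContext e).exists_lift (b ≫ c) p
    (by simpa using hp.symm)
  exact ⟨l ≫ (δ.restrict e).ds, by simp only [Category.assoc]; exact l ≫= (δ.extension e).po.w⟩

end Restriction

section SpanComposition

variable {X₁ K₁ N K₂ X₂ K : 𝒞} {v₁ : K₁ ⟶ X₁} {w₁ : K₁ ⟶ N} {w₂ : K₂ ⟶ N} {v₂ : K₂ ⟶ X₂}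
  {q₂ : K ⟶ K₂} {q₁ : K ⟶ K₁} [Mono w₁] [Mono w₂] {m : X₁ ⟶ X}

/-- Consecutive direct derivations along two composable spans form a direct derivation along
the composite span (the synthesis half of the concurrency theorem). -/
noncomputable def comp (hK : IsPullback q₂ q₁ w₂ w₁) (ε₁ : DerivData w₁ v₁ m)
    (ε₂ : DerivData v₂ w₂ ε₁.ms) :
    DerivData (q₂ ≫ v₂) (q₁ ≫ v₁) m :=
  have hZ := IsPullback.of_hasPullback ε₁.ds ε₂.d
  have hk : (q₁ ≫ ε₁.k) ≫ ε₁.ds = (q₂ ≫ ε₂.k) ≫ ε₂.d := by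
    simp only [Category.assoc, ← ε₁.po.w, ← ε₂.poc.w, hK.w_assoc]
  { D := pullback ε₁.ds ε₂.d
    k := hZ.lift _ _ hk
    d := pullback.fst _ _ ≫ ε₁.d
    poc := (isPushout_of_isPullback_of_isPushout ε₁.po ε₂.poc hK hZ.flip
      (hZ.lift_fst _ _ hk) (hZ.lift_snd _ _ hk)).paste_horiz ε₁.poc
    Y := ε₂.Y
    ms := ε₂.ms
    ds := pullback.snd _ _ ≫ ε₂.ds
    po := (isPushout_of_isPullback_of_isPushout ε₂.poc ε₁.po hK.flip hZ
      (hZ.lift_snd _ _ hk) (hZ.lift_fst _ _ hk)).paste_horiz ε₂.po }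

section Analysis

variable (δ : DerivData (q₂ ≫ v₂) (q₁ ≫ v₁) m) (hK : IsPullback q₂ q₁ w₂ w₁)

/-- The first of the two consecutive direct derivations into which a direct derivation along a
composite span decomposes (the analysis half of the concurrency theorem). -/
noncomputable def first : DerivData w₁ v₁ m :=
  have : Mono q₁ := hK.mono_snd_of_mono
  have hP := IsPushout.of_hasPushout q₁ δ.k
  { D := pushout q₁ δ.k
    k := pushout.inl q₁ δ.k
    d := hP.desc (v₁ ≫ m) δ.d (by rw [← δ.poc.w, Category.assoc])
    poc := IsPushout.of_left (by rw [IsPushout.inr_desc]; exact δ.poc)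
      (IsPushout.inl_desc _ _ _ _).symm hP
    Y := pushout w₁ (pushout.inl q₁ δ.k)
    ms := pushout.inl _ _
    ds := pushout.inr _ _
    po := IsPushout.of_hasPushout _ _ }

/-- The embedding of the context of a direct derivation along a composite span into the context of
its first step. -/
noncomputable def contextToFirst : δ.D ⟶ (first δ hK).D :=
  have : Mono q₁ := hK.mono_snd_of_mono
  pushout.inr q₁ δ.k

theorem isPushout_contextToFirst : IsPushout q₁ δ.k (first δ hK).k (contextToFirst δ hK) :=
  have : Mono q₁ := hK.mono_snd_of_mono
  IsPushout.of_hasPushout q₁ δ.k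

theorem contextToFirst_d : contextToFirst δ hK ≫ (first δ hK).d = δ.d :=
  IsPushout.inr_desc _ _ _ _

/-- The second step of the decomposition started by `DerivData.first`. -/
noncomputable def second : DerivData v₂ w₂ (first δ hK).ms :=
  have : Mono q₂ := hK.mono_fst_of_mono
  have hQ := IsPushout.of_hasPushout q₂ δ.k
  have hX := (isPushout_contextToFirst δ hK).paste_horiz (first δ hK).po
  { D := pushout q₂ δ.k
    k := pushout.inl q₂ δ.k
    d := hQ.desc (w₂ ≫ (first δ hK).ms) (contextToFirst δ hK ≫ (first δ hK).ds)
      (by rw [← Category.assoc, hK.w, hX.w])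
    poc := IsPushout.of_left (by rw [IsPushout.inr_desc, hK.w]; exact hX)
      (IsPushout.inl_desc _ _ _ _).symm hQ
    Y := δ.Y
    ms := δ.ms
    ds := hQ.desc (v₂ ≫ δ.ms) δ.ds (by rw [← Category.assoc, δ.po.w])
    po := IsPushout.of_left (by rw [IsPushout.inr_desc]; exact δ.po)
      (IsPushout.inl_desc _ _ _ _).symm hQ }

/-- The embedding of the context of a direct derivation along a composite span into the context of
its second step. -/
noncomputable def contextToSecond : δ.D ⟶ (second δ hK).D :=
  have : Mono q₂ := hK.mono_fst_of_mono
  pushout.inr q₂ δ.k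

theorem isPushout_contextToSecond : IsPushout q₂ δ.k (second δ hK).k (contextToSecond δ hK) :=
  have : Mono q₂ := hK.mono_fst_of_mono
  IsPushout.of_hasPushout q₂ δ.k

theorem contextToSecond_ds : contextToSecond δ hK ≫ (second δ hK).ds = δ.ds :=
  IsPushout.inr_desc _ _ _ _

theorem isPullback_context :
    IsPullback (contextToSecond δ hK) (contextToFirst δ hK) (second δ hK).d (first δ hK).ds := by
  have : Mono q₁ := hK.mono_snd_of_mono
  have hQ := isPushout_contextToSecond δ hK
  exact ((Adhesive.van_kampen (first δ hK).po q₂ δ.k (second δ hK).k (contextToSecond δ hK)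
    q₁ w₂ (contextToFirst δ hK) (second δ hK).d hK
    (Adhesive.isPullback_of_isPushout_of_mono_left (isPushout_contextToFirst δ hK)).flip
    ⟨(IsPushout.inl_desc _ _ _ _)⟩ ⟨IsPushout.inr_desc _ _ _ _⟩ ⟨hQ.w⟩).1 hQ).2

end Analysis

end SpanComposition

end DerivData

attribute [instance] Rule.mono_o Rule.mono_i CompData.mono_n1 CompData.mono_n2

namespace CompData

variable {𝒞 : Type u} [Category.{v} 𝒞] {r2 r1 : Rule 𝒞}

/-- The direct derivation `N ⟹ O21` of `r2` inside composition data. -/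
def deriv2 {M : 𝒞} {p2 : M ⟶ r2.I} {p1 : M ⟶ r1.O} (c : CompData r2 r1 M p2 p1) :
    DerivData r2.o r2.i c.n2 :=
  ⟨c.K2b, c.k2, c.w2, c.poc2, c.O21, c.c2, c.v2, c.poO⟩

/-- The direct derivation `N ⟹ I21` of the reverse of `r1` inside composition data. -/
def deriv1 {M : 𝒞} {p2 : M ⟶ r2.I} {p1 : M ⟶ r1.O} (c : CompData r2 r1 M p2 p1) :
    DerivData r1.i r1.o c.n1 :=
  ⟨c.K1b, c.k1, c.w1, c.poc1, c.I21, c.c1, c.v1, c.poI⟩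

variable [Adhesive 𝒞]

instance mono_w2 {M : 𝒞} {p2 : M ⟶ r2.I} {p1 : M ⟶ r1.O} (c : CompData r2 r1 M p2 p1) :
    Mono c.w2 :=
  c.deriv2.mono_d

instance mono_w1 {M : 𝒞} {p2 : M ⟶ r2.I} {p1 : M ⟶ r1.O} (c : CompData r2 r1 M p2 p1) :
    Mono c.w1 :=
  c.deriv1.mono_d

instance mono_v1 {M : 𝒞} {p2 : M ⟶ r2.I} {p1 : M ⟶ r1.O} (c : CompData r2 r1 M p2 p1) :
    Mono c.v1 :=
  c.deriv1.mono_ds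

instance mono_c1 {M : 𝒞} {p2 : M ⟶ r2.I} {p1 : M ⟶ r1.O} (c : CompData r2 r1 M p2 p1) :
    Mono c.c1 :=
  c.deriv1.mono_ms

/-- Composition data from direct derivations of `r2` and of the reverse of `r1` out of the pushout
of the overlap, and a pullback of their contexts. -/
def ofDerivs {M N K : 𝒞} {p2 : M ⟶ r2.I} {p1 : M ⟶ r1.O} [Mono p2] [Mono p1]
    {n2 : r2.I ⟶ N} {n1 : r1.O ⟶ N} (hN : IsPushout p2 p1 n2 n1)
    (δ2 : DerivData r2.o r2.i n2) (δ1 : DerivData r1.i r1.o n1)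
    {q2 : K ⟶ δ2.D} {q1 : K ⟶ δ1.D} (hK : IsPullback q2 q1 δ2.d δ1.d) :
    CompData r2 r1 M p2 p1 where
  mono_p2 := inferInstance
  mono_p1 := inferInstance
  N := N
  n2 := n2
  n1 := n1
  poN := hN
  mono_n2 := Adhesive.mono_of_isPushout_of_mono_right hN
  mono_n1 := Adhesive.mono_of_isPushout_of_mono_left hN
  K2b := δ2.D
  k2 := δ2.k
  w2 := δ2.d
  poc2 := δ2.poc
  O21 := δ2.Y
  c2 := δ2.ms
  v2 := δ2.ds
  poO := δ2.po
  K1b := δ1.D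
  k1 := δ1.k
  w1 := δ1.d
  poc1 := δ1.poc
  I21 := δ1.Y
  c1 := δ1.ms
  v1 := δ1.ds
  poI := δ1.po
  K21 := K
  q2 := q2
  q1 := q1
  pbK := hK
  mono_oleg := have : Mono q2 := hK.mono_fst_of_mono; inferInstance
  mono_ileg := have : Mono q1 := hK.mono_snd_of_mono; inferInstance

section Overlap

variable {X : 𝒞} {f : r2.I ⟶ X} {g : r1.O ⟶ X} [Mono f] [Mono g]
  (δ2 : DerivData r2.o r2.i f) (δ1 : DerivData r1.i r1.o g)

/-- The composite of `r2` and `r1` along the overlap of two matches into a common object `X`,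
obtained by restricting both direct derivations to the union of the matches. -/
noncomputable def ofOverlap : CompData r2 r1 (pullback f g) (pullback.fst f g) (pullback.snd f g) :=
  ofDerivs (IsPushout.of_hasPushout _ _)
    (δ2.restrict (pushout.inl_desc f g pullback.condition))
    (δ1.restrict (pushout.inr_desc f g pullback.condition)) (IsPullback.of_hasPullback _ _)

/-- The inclusion of the union of two matches into their common target. -/
noncomputable def ofOverlapInclusion : (ofOverlap δ2 δ1).N ⟶ X :=
  pushout.desc f g pullback.condition

instance mono_ofOverlapInclusion : Mono (ofOverlapInclusion δ2 δ1) :=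
  Adhesive.desc_mono_of_mono

theorem n2_ofOverlapInclusion : (ofOverlap δ2 δ1).n2 ≫ ofOverlapInclusion δ2 δ1 = f :=
  pushout.inl_desc f g pullback.condition

theorem n1_ofOverlapInclusion : (ofOverlap δ2 δ1).n1 ≫ ofOverlapInclusion δ2 δ1 = g :=
  pushout.inr_desc f g pullback.condition

/-- The extension of the restricted derivation of `r2` back to the common target. -/
noncomputable def ofOverlapExtension2 :
    DerivData (ofOverlap δ2 δ1).v2 (ofOverlap δ2 δ1).w2 (ofOverlapInclusion δ2 δ1) :=
  δ2.extension (n2_ofOverlapInclusion δ2 δ1)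

/-- The extension of the restricted derivation of the reverse of `r1` back to the common target. -/
noncomputable def ofOverlapExtension1 :
    DerivData (ofOverlap δ2 δ1).v1 (ofOverlap δ2 δ1).w1 (ofOverlapInclusion δ2 δ1) :=
  δ1.extension (n1_ofOverlapInclusion δ2 δ1)

instance mono_ofOverlapExtension2_ms : Mono (ofOverlapExtension2 δ2 δ1).ms :=
  DerivData.mono_ms _

/-- The reverse of the composite rule along the overlap transforms the result of `δ2` into the
result of `δ1`. -/
noncomputable def ofOverlapDeriv :
    DerivData (ofOverlap δ2 δ1).rule.i (ofOverlap δ2 δ1).rule.o (ofOverlapExtension2 δ2 δ1).ms :=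
  DerivData.comp (ofOverlap δ2 δ1).pbK.flip (ofOverlapExtension2 δ2 δ1).reverse
    (ofOverlapExtension1 δ2 δ1)

end Overlap

section Reassociation

variable {r3 : Rule 𝒞} {M : 𝒞} {p3 : M ⟶ r3.I} {p2 : M ⟶ r2.O} (c : CompData r3 r2 M p3 p2)
  {X : 𝒞} {m : c.I21 ⟶ X} (δ : DerivData (c.q2 ≫ c.v2) (c.q1 ≫ c.v1) m)

/-- The application of `r2` with which a direct derivation of the composite rule begins. -/
noncomputable def firstStep : DerivData r2.o r2.i (c.c1 ≫ m) :=
  c.deriv1.reverse.paste (δ.first c.pbK : DerivData c.w1 c.v1 m)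

/-- The match of `r3` into the result of `CompData.firstStep`. -/
noncomputable def secondMatch : r3.I ⟶ (δ.first c.pbK).Y :=
  c.n2 ≫ (δ.first c.pbK).ms

/-- The application of `r3` with which a direct derivation of the composite rule ends. -/
noncomputable def secondStep : DerivData r3.o r3.i (c.secondMatch δ) :=
  c.deriv2.paste (δ.second c.pbK : DerivData c.v2 c.w2 (δ.first c.pbK).ms)

variable [Mono m]

instance mono_secondMatch : Mono (c.secondMatch δ) :=
  have : Mono (δ.first c.pbK).ms := inferInstance
  mono_comp c.n2 (δ.first c.pbK).ms

variable {n : r1.O ⟶ X} [Mono n] (δ1 : DerivData r1.i r1.o n)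

/-- The inclusion of the output of `r2 ▷ r1`, composed along the overlap of `c.firstStep δ` with
`δ1`, into the result of `c.firstStep δ`. -/
noncomputable def outputInclusion :
    (ofOverlap (c.firstStep δ) δ1).rule.O ⟶ (δ.first c.pbK).Y :=
  (ofOverlapExtension2 (c.firstStep δ) δ1).ms

instance mono_outputInclusion : Mono (c.outputInclusion δ δ1) :=
  mono_ofOverlapExtension2_ms _ _

theorem exists_comp_outputInclusion_eq_n1_comp :
    ∃ l, l ≫ c.outputInclusion δ δ1 = c.n1 ≫ (δ.first c.pbK).ms :=
  ⟨(ofOverlap (c.firstStep δ) δ1).c2,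
    (c.firstStep δ).restrict_ms_extension_ms (n2_ofOverlapInclusion _ δ1)⟩

theorem exists_comp_outputInclusion {P : 𝒞} {p : P ⟶ (δ.first c.pbK).D} {b : P ⟶ r1.O}
    (hp : p ≫ (δ.first c.pbK).d = b ≫ n) :
    ∃ l, l ≫ c.outputInclusion δ δ1 = p ≫ (δ.first c.pbK).ds :=
  (c.firstStep δ).exists_comp_extension_ms (n2_ofOverlapInclusion _ δ1)
    (hp.trans (congrArg (b ≫ ·) (n1_ofOverlapInclusion (c.firstStep δ) δ1).symm))

variable {M' : 𝒞} {s : M' ⟶ c.I21} {t : M' ⟶ r1.O} [Mono s] (hX : IsPushout s t m n)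

include hX in
theorem hom_ext_secondMatch {W : 𝒞} {f g : (δ.first c.pbK).Y ⟶ W}
    (h3 : c.secondMatch δ ≫ f = c.secondMatch δ ≫ g)
    (h21 : c.outputInclusion δ δ1 ≫ f = c.outputInclusion δ δ1 ≫ g) : f = g := by
  obtain ⟨k, hk⟩ := c.exists_comp_outputInclusion_eq_n1_comp δ δ1
  obtain ⟨l, hl⟩ := c.exists_comp_outputInclusion δ δ1
    (pullback.condition (f := (δ.first c.pbK).d) (g := n))
  refine (δ.first c.pbK).hom_ext_of_isPushout hX (c.poN.hom_ext ?_ ?_) ?_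
  · simpa only [secondMatch, Category.assoc] using h3
  · rw [← reassoc_of% hk, ← reassoc_of% hk, h21]
  · rw [← reassoc_of% hl, ← reassoc_of% hl, h21]

/-- The right-nested composite: `r3` is matched against the composite of `r2` and `r1` along the
overlap of `c.secondMatch δ` with `c.outputInclusion δ δ1`. -/
noncomputable def reassoc {K : 𝒞} {a : K ⟶ δ.D} {b : K ⟶ δ1.D} (hK : IsPullback a b δ.d δ1.d) :
    CompData r3 (ofOverlap (c.firstStep δ) δ1).rule
      (pullback (c.secondMatch δ) (c.outputInclusion δ δ1))
      (pullback.fst _ _) (pullback.snd _ _) :=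
  ofDerivs (isPushout_pullback_of_jointly_epic fun _ _ => c.hom_ext_secondMatch δ δ1 hX)
    (c.secondStep δ) (ofOverlapDeriv (c.firstStep δ) δ1)
    (isPullback_of_isPullback_comp (δ.isPullback_context c.pbK)
      (IsPullback.of_hasPullback (δ.first c.pbK).d δ1.d)
      (by rw [DerivData.contextToFirst_d]; exact hK))

end Reassociation

end CompData

theorem dpo_composition_assoc_right_to_left_general
    {𝒞 : Type u} [Category.{v} 𝒞] [Adhesive 𝒞] {r1 r2 r3 : Rule 𝒞}
    {M32 : 𝒞} {p3 : M32 ⟶ r3.I} {p2 : M32 ⟶ r2.O}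
    (c32 : CompData r3 r2 M32 p3 p2)
    {M' : 𝒞} {s32 : M' ⟶ (c32.rule).I} {s1 : M' ⟶ r1.O}
    (c321 : CompData c32.rule r1 M' s32 s1) :
    ∃ (M21 : 𝒞) (q2 : M21 ⟶ r2.I) (q1 : M21 ⟶ r1.O)
      (c21 : CompData r2 r1 M21 q2 q1)
      (M3 : 𝒞) (t3 : M3 ⟶ r3.I) (t21 : M3 ⟶ (c21.rule).O)
      (cfin : CompData r3 c21.rule M3 t3 t21),
      RuleIso c321.rule cfin.rule := by
  let m : c32.I21 ⟶ c321.N := c321.n2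
  have : Mono m := c321.mono_n2
  have : Mono (Y := c32.I21) s32 := c321.mono_p2
  let δ : DerivData (c32.q2 ≫ c32.v2) (c32.q1 ≫ c32.v1) m := c321.deriv2
  let cfin := c32.reassoc δ c321.deriv1 c321.poN c321.pbK
  have ho : c321.rule.o = cfin.rule.o :=
    (c321.q2 ≫= δ.contextToSecond_ds c32.pbK).symm.trans (Category.assoc _ _ _).symm
  have hi : c321.rule.i = cfin.rule.i :=
    ((IsPullback.of_hasPullback (δ.first c32.pbK).d c321.deriv1.d).lift_snd_assoc _ _ _ _).symm
  exact ⟨_, _, _, CompData.ofOverlap (c32.firstStep δ) c321.deriv1, _, _, _, cfin,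
    Iso.refl _, Iso.refl _, Iso.refl _,
    (Category.comp_id _).trans (ho.trans (Category.id_comp _).symm),
    (Category.comp_id _).trans (hi.trans (Category.id_comp _).symm)⟩

/-- **Associativity of DPO rule composition (second direction).** If `μ32` is a
DPO-admissible match of `r3` into `r2` with composite `r32 = r3 ▷[μ32] r2`, and
`μ(32)1` is a DPO-admissible match of `r32` into `r1`, then there exist a
DPO-admissible match `μ21` of `r2` into `r1` and a DPO-admissible match `μ3(21)` of
`r3` into `r21 = r2 ▷[μ21] r1` such that `(r3 ▷[μ32] r2) ▷[μ(32)1] r1` and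
`r3 ▷[μ3(21)] (r2 ▷[μ21] r1)` are isomorphic as spans. -/
theorem dpo_composition_assoc_right_to_left
    {𝒞 : Type u} [Category.{v} 𝒞] [Adhesive 𝒞]
    [HasInitial 𝒞] [HasStrictInitialObjects 𝒞] [InitialMonoClass 𝒞]
    (hfact : HasEpiMonoFact 𝒞) (hfin : Finitary 𝒞)
    (r1 r2 r3 : Rule 𝒞)
    {M32 : 𝒞} {p3 : M32 ⟶ r3.I} {p2 : M32 ⟶ r2.O}
    (c32 : CompData r3 r2 M32 p3 p2)
    {M' : 𝒞} {s32 : M' ⟶ (c32.rule).I} {s1 : M' ⟶ r1.O}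
    (c321 : CompData c32.rule r1 M' s32 s1) :
    ∃ (M21 : 𝒞) (q2 : M21 ⟶ r2.I) (q1 : M21 ⟶ r1.O)
      (c21 : CompData r2 r1 M21 q2 q1)
      (M3 : 𝒞) (t3 : M3 ⟶ r3.I) (t21 : M3 ⟶ (c21.rule).O)
      (cfin : CompData r3 c21.rule M3 t3 t21),
      RuleIso c321.rule cfin.rule :=
  dpo_composition_assoc_right_to_left_general c32 c321
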